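/- arXiv:1406.2722 — 2 statements merged into one kernel-verified Lean document; each statement's English description precedes it below -/
import Mathlib

section
/- Let A be a square matrix over a commutative ring indexed by Fin n ⊕ Fin m. Then for every k and all finsets S, T ⊆ Fin n with S.card = T.card = k, one has ∑_{W ⊆ Fin m} (−1)^{W.card} · det A[Ŝ ∪ Ŵ, T̂ ∪ Ŵ] = ∑_{(R₁,R₂)} ε(R₁,R₂) · det A[R₁, T̂] · det (1−A)[R₂, M̂], where the right-hand sum ranges over all pairs of disjoint finsets R₁, R₂ of Fin n ⊕ Fin m with R₁ ∪ R₂ = Ŝ ∪ M̂ and R₁.card = k. (This expresses the partial supertrace of the exterior algebra action of A over the right block as a contraction against the top form transported by 1−A.) -/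
open Matrix

/-- Determinant of the submatrix of `A` with rows indexed by the elements of `S` and
columns indexed by the elements of `T`, each listed in increasing order.
Defined to be `0` if the cardinalities of `S` and `T` differ
(the empty determinant is `1`). -/
noncomputable def fminor {ι R : Type*} [LinearOrder ι] [CommRing R]
    (A : Matrix ι ι R) (S T : Finset ι) : R :=
  if h : S.card = T.card then
    (Matrix.of fun i j : Fin T.card =>
      A (S.orderEmbOfFin h i) (T.orderEmbOfFin rfl j)).det
  else 0

/-- `Fin n ⊕ Fin m` linearly ordered so that every element of the left summand precedes
every element of the right summand, each summand with its natural order. -/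
abbrev SumLexIdx (n m : ℕ) := Lex (Fin n ⊕ Fin m)

/-- Inclusion of `Fin n` as the left block. -/
def inlL {n m : ℕ} (i : Fin n) : SumLexIdx n m := toLex (Sum.inl i)

/-- Inclusion of `Fin m` as the right block. -/
def inrL {n m : ℕ} (j : Fin m) : SumLexIdx n m := toLex (Sum.inr j)

/-- View a matrix indexed by `Fin n ⊕ Fin m` as a matrix indexed by the linearly
ordered index type `SumLexIdx n m`. -/
def toLexMat {n m : ℕ} {R : Type*} (A : Matrix (Fin n ⊕ Fin m) (Fin n ⊕ Fin m) R) :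
    Matrix (SumLexIdx n m) (SumLexIdx n m) R := fun i j => A (ofLex i) (ofLex j)

/-- For disjoint finsets `R₁, R₂`, the sign `ε(R₁,R₂) = (-1)^c` where `c` is the
number of pairs `(a,b) ∈ R₁ × R₂` with `b < a`. -/
noncomputable def epsSign {ι : Type*} [LinearOrder ι] (R : Type*) [CommRing R]
    (R₁ R₂ : Finset ι) : R :=
  (-1) ^ ((R₁ ×ˢ R₂).filter (fun ab => ab.2 < ab.1)).card

lemma fminor_eq_det {ι κ R : Type*} [LinearOrder ι] [LinearOrder κ] [Fintype κ] [CommRing R]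
    (A : Matrix ι ι R) (r c : κ → ι) (hr : StrictMono r) (hc : StrictMono c)
    {S T : Finset ι} (hS : Finset.univ.image r = S) (hT : Finset.univ.image c = T) :
    fminor A S T = (A.submatrix r c).det := by
  have hSc : S.card = Fintype.card κ := by
    rw [← hS, Finset.card_image_of_injective _ hr.injective, Finset.card_univ]
  have hTc : T.card = Fintype.card κ := by
    rw [← hT, Finset.card_image_of_injective _ hc.injective, Finset.card_univ]
  have h : S.card = T.card := hSc.trans hTc.symm
  unfold fminor
  rw [dif_pos h]
  let e := Fintype.orderIsoFinOfCardEq κ hTc.symm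
  have h1 : r ∘ e = S.orderEmbOfFin h :=
    Finset.orderEmbOfFin_unique h (fun x => by simp [← hS]) (hr.comp e.strictMono)
  have h2 : c ∘ e = T.orderEmbOfFin rfl :=
    Finset.orderEmbOfFin_unique rfl (fun x => by simp [← hT]) (hc.comp e.strictMono)
  rw [← Matrix.det_submatrix_equiv_self e.toEquiv (A.submatrix r c)]
  congr 1
  ext i j
  simp only [Matrix.of_apply, Matrix.submatrix_apply, ← h1, ← h2]
  rfl

lemma fminor_congr {ι R : Type*} [LinearOrder ι] [CommRing R]
    (A B : Matrix ι ι R) (S T : Finset ι) (h : ∀ i ∈ S, ∀ j ∈ T, A i j = B i j) :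
    fminor A S T = fminor B S T := by
  unfold fminor
  split_ifs with hc
  · congr 1
    ext i j
    exact h _ (Finset.orderEmbOfFin_mem _ _ _) _ (Finset.orderEmbOfFin_mem _ _ _)
  · rfl

lemma fminor_image {ι κ R : Type*} [LinearOrder ι] [LinearOrder κ] [CommRing R]
    (A : Matrix ι ι R) (r c : κ → ι) (hr : StrictMono r) (hc : StrictMono c) (s t : Finset κ) :
    fminor A (s.image r) (t.image c) = fminor (A.submatrix r c) s t := by
  by_cases h : s.card = t.card
  · rw [fminor_eq_det (κ := Fin t.card) A (r ∘ s.orderEmbOfFin h) (c ∘ t.orderEmbOfFin rfl)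
      (hr.comp (s.orderEmbOfFin h).strictMono) (hc.comp (t.orderEmbOfFin rfl).strictMono)
      (by rw [← Finset.image_image, Finset.image_orderEmbOfFin_univ])
      (by rw [← Finset.image_image, Finset.image_orderEmbOfFin_univ])]
    unfold fminor
    rw [dif_pos h]
    rfl
  · unfold fminor
    rw [dif_neg h, dif_neg]
    rwa [Finset.card_image_of_injective _ hr.injective,
      Finset.card_image_of_injective _ hc.injective]

lemma epsSign_eq_prod {ι R : Type*} [LinearOrder ι] [CommRing R] (s t : Finset ι) :
    epsSign R s t = ∏ a ∈ s, ∏ b ∈ t, if b < a then (-1 : R) else 1 := by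
  unfold epsSign
  rw [← Finset.prod_product', Finset.prod_ite]
  simp

lemma epsSign_image {ι κ R : Type*} [LinearOrder ι] [LinearOrder κ] [CommRing R]
    (r : κ → ι) (hr : StrictMono r) (s t : Finset κ) :
    epsSign R (s.image r) (t.image r) = epsSign R s t := by
  simp only [epsSign_eq_prod]
  rw [Finset.prod_image hr.injective.injOn]
  refine Finset.prod_congr rfl fun a _ => ?_
  rw [Finset.prod_image hr.injective.injOn]
  simp only [hr.lt_iff_lt]

lemma det_cols {κ R : Type*} [DecidableEq κ] [Fintype κ] [CommRing R]
    (B : Matrix κ κ R) (t : Finset κ) :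
    (Matrix.of fun i j => if j ∈ t then (1 - B) i j else B i j).det =
      ∑ s ∈ t.powerset, (-1 : R) ^ s.card *
        (B.submatrix (Subtype.val : {x // x ∉ t ∨ x ∈ s} → κ) Subtype.val).det := by
  rw [← Matrix.det_transpose]
  let m : κ → κ → R := fun j i => - B i j
  let m' : κ → κ → R := fun j i => if j ∈ t then (1 : Matrix κ κ R) i j else B i j
  have h := (Matrix.detRowAlternating (R := R) (n := κ)).toMultilinearMap.map_piecewise_add m m' t
  have h0 : (Matrix.of fun i j => if j ∈ t then (1 - B) i j else B i j)ᵀ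
      = t.piecewise (m + m') m' := by
    ext j i
    by_cases hj : j ∈ t <;> simp [hj, m, m', Matrix.one_apply] <;> ring
  rw [h0]
  refine h.trans (Finset.sum_congr rfl fun s hs => ?_)
  rw [Finset.mem_powerset] at hs
  change Matrix.det (Matrix.of (s.piecewise m m')) = _
  rw [Matrix.twoBlockTriangular_det (Matrix.of (s.piecewise m m')) (fun x => x ∉ t ∨ x ∈ s)]
  · have e2 : (Matrix.toSquareBlockProp (Matrix.of (s.piecewise m m'))
        (fun x => ¬ (x ∉ t ∨ x ∈ s))) = 1 := by
      ext ⟨j, hj⟩ ⟨i, hi⟩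
      simp only [not_or, not_not] at hj hi
      simp [Matrix.toSquareBlockProp, hj, m', Matrix.one_apply, eq_comm]
    have e1 : (Matrix.toSquareBlockProp (Matrix.of (s.piecewise m m'))
        (fun x => x ∉ t ∨ x ∈ s)) = Matrix.of fun j i : {x // x ∉ t ∨ x ∈ s} =>
          (if j.1 ∈ s then (-1 : R) else 1) *
          (B.submatrix (Subtype.val : {x // x ∉ t ∨ x ∈ s} → κ) Subtype.val)ᵀ j i := by
      ext ⟨j, hj⟩ ⟨i, hi⟩
      by_cases hjs : j ∈ s
      · simp [Matrix.toSquareBlockProp, hjs, m]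
      · simp [Matrix.toSquareBlockProp, hjs, m', hj.resolve_right hjs]
    rw [e2, Matrix.det_one, mul_one, e1, Matrix.det_mul_column, Matrix.det_transpose]
    congr 1
    rw [← Finset.prod_subtype (tᶜ ∪ s) (by simp) (fun j => if j ∈ s then (-1 : R) else 1)]
    rw [Finset.prod_ite]
    simp only [Finset.prod_const, Finset.prod_const_one, mul_one, one_pow]
    congr 2
    ext x
    simp
  · intro i hi j hj
    simp only [not_or, not_not] at hi
    have : j ≠ i := by rintro rfl; simp [hi] at hj
    simp [hi, m', Matrix.one_apply, this]

lemma prod_orderEmb {ι R : Type*} [LinearOrder ι] [CommMonoid R] {k : ℕ} (s : Finset ι)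
    (hs : s.card = k) (f : ι → R) : ∏ a ∈ s, f a = ∏ i, f (s.orderEmbOfFin hs i) := by
  conv_lhs => rw [← Finset.image_orderEmbOfFin_univ s hs]
  rw [Finset.prod_image (s.orderEmbOfFin hs).injective.injOn]

lemma laplace {R : Type*} [CommRing R] {k m : ℕ} (D : Matrix (Fin (k + m)) (Fin (k + m)) R) :
    D.det = ∑ s ∈ Finset.univ.filter (fun s : Finset (Fin (k + m)) => s.card = k),
      epsSign R s sᶜ * fminor D s (Finset.univ.image (Fin.castAdd m)) *
        fminor D sᶜ (Finset.univ.image (Fin.natAdd k)) := by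
  let a : Fin (k + m) → Fin (k + m) → R := fun i j => if (j : ℕ) < k then D i j else 0
  let b : Fin (k + m) → Fin (k + m) → R := fun i j => if (j : ℕ) < k then 0 else D i j
  have h := (Matrix.detRowAlternating (R := R) (n := Fin (k + m))).toMultilinearMap.map_add_univ a b
  have h0 : D = a + b := by
    ext i j
    by_cases hj : (j : ℕ) < k <;> simp [a, b, hj]
  conv_lhs => rw [h0]
  refine h.trans ?_
  rw [Finset.sum_filter]
  refine Finset.sum_congr rfl fun s _ => ?_
  change Matrix.det (Matrix.of (s.piecewise a b)) = _
  split_ifs with hs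
  · have hs' : sᶜ.card = m := by rw [Finset.card_compl, hs]; simp
    let τ : Equiv.Perm (Fin (k + m)) := finSumFinEquiv.symm.trans (finSumEquivOfFinset hs hs')
    have τl : ∀ i, τ (Fin.castAdd m i) = s.orderEmbOfFin hs i := fun i => by simp [τ]
    have τr : ∀ i, τ (Fin.natAdd k i) = sᶜ.orderEmbOfFin hs' i := fun i => by simp [τ]
    have sgn : ((Equiv.Perm.sign τ : ℤ) : R) = epsSign R s sᶜ := by
      rw [Equiv.Perm.sign_eq_prod_prod_Ioi, epsSign_eq_prod]
      rw [prod_orderEmb s hs]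
      have hI : ∀ i : Fin (k + m), Finset.Ioi i = Finset.univ.filter (fun j => i < j) := by
        intro i; ext; simp
      simp only [hI, Finset.prod_filter]
      rw [Fin.prod_univ_add]
      have hx : ∀ {N : ℕ} (x y : Fin N) {α : Type} (u v : α),
          (if x < y then (if x < y then u else v) else u) = u := by
        intros; split_ifs <;> rfl
      have hlt : ∀ (x : Fin k) (y : Fin m), Fin.castAdd m x < Fin.natAdd k y := fun x y => by
        rw [Fin.lt_def]; simp; omega
      have hlt' : ∀ (x : Fin k) (y : Fin m), ¬ Fin.natAdd k y < Fin.castAdd m x := fun x y =>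
        (hlt x y).le.not_gt
      have hcc : ∀ (x y : Fin k), Fin.castAdd m x < Fin.castAdd m y ↔ x < y := fun x y => Iff.rfl
      have hnn : ∀ (x y : Fin m), Fin.natAdd k x < Fin.natAdd k y ↔ x < y := fun x y =>
        (Fin.strictMono_natAdd k).lt_iff_lt
      simp only [Fin.prod_univ_add, τl, τr, hlt, hlt', hcc, hnn, OrderEmbedding.lt_iff_lt, hx,
        if_true, if_false, Finset.prod_const_one, one_mul, mul_one]
      rw [Units.coe_prod, Int.cast_prod]
      refine Finset.prod_congr rfl fun x _ => ?_
      rw [Units.coe_prod, Int.cast_prod]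
      rw [prod_orderEmb sᶜ hs']
      refine Finset.prod_congr rfl fun y _ => ?_
      have hne : s.orderEmbOfFin hs x ≠ sᶜ.orderEmbOfFin hs' y := fun h =>
        Finset.mem_compl.1 (Finset.orderEmbOfFin_mem sᶜ hs' y)
          (h ▸ Finset.orderEmbOfFin_mem s hs x)
      rcases lt_or_gt_of_ne hne with h | h
      · simp [h, h.le.not_gt]
      · simp [h, h.le.not_gt]
    have hd : (Matrix.of (s.piecewise a b)).submatrix (fun x => τ (finSumFinEquiv x)) finSumFinEquiv
        = Matrix.fromBlocks (D.submatrix (s.orderEmbOfFin hs) (Fin.castAdd m)) 0 0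
            (D.submatrix (sᶜ.orderEmbOfFin hs') (Fin.natAdd k)) := by
      have hm1 : ∀ i, s.orderEmbOfFin hs i ∈ s := fun i => Finset.orderEmbOfFin_mem _ _ _
      have hm2 : ∀ i, sᶜ.orderEmbOfFin hs' i ∉ s := fun i =>
        Finset.mem_compl.1 (Finset.orderEmbOfFin_mem _ _ _)
      ext (i | i) (j | j) <;> simp [τl, τr, hm1, hm2, a, b]
    have hd2 := congrArg Matrix.det hd
    rw [Matrix.det_fromBlocks_zero₂₁] at hd2
    have hd3 : ((Matrix.of (s.piecewise a b)).submatrix (fun x => τ (finSumFinEquiv x))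
        finSumFinEquiv).det = (Equiv.Perm.sign τ : ℤ) * (Matrix.of (s.piecewise a b)).det := by
      rw [← Matrix.det_permute τ, ← Matrix.det_submatrix_equiv_self finSumFinEquiv]
      rfl
    rw [hd2, sgn] at hd3
    have hsq : epsSign R s sᶜ * epsSign R s sᶜ = 1 := by
      unfold epsSign
      rw [← mul_pow]; simp
    rw [fminor_eq_det D (s.orderEmbOfFin hs) (Fin.castAdd m) (OrderEmbedding.strictMono _)
      (Fin.strictMono_castAdd m) (Finset.image_orderEmbOfFin_univ _ _) rfl,
      fminor_eq_det D (sᶜ.orderEmbOfFin hs') (Fin.natAdd k) (OrderEmbedding.strictMono _)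
      (Fin.strictMono_natAdd k) (Finset.image_orderEmbOfFin_univ _ _) rfl, mul_assoc, hd3, ← mul_assoc, hsq, one_mul]
  · rw [Matrix.det_apply]
    refine Finset.sum_eq_zero fun σ _ => ?_
    have : ∃ i, (Matrix.of (s.piecewise a b)) (σ i) i = 0 := by
      by_contra! hne
      apply hs
      have : s = (Finset.univ.image (Fin.castAdd m)).map σ.toEmbedding := by
        ext x
        obtain ⟨i, rfl⟩ := σ.surjective x
        have := hne i
        simp only [Matrix.of_apply, Finset.piecewise, a, b] at this
        have h3 : (∃ y, Fin.castAdd m y = i) ↔ (i : ℕ) < k :=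
          ⟨by rintro ⟨y, rfl⟩; simp, fun h => ⟨⟨i, h⟩, rfl⟩⟩
        simp only [Finset.mem_map_equiv, Equiv.symm_apply_apply, Finset.mem_image,
          Finset.mem_univ, true_and, h3]
        split_ifs at this <;> simp_all
      rw [this, Finset.card_map, Finset.card_image_of_injective _ (Fin.castAdd_injective k m)]
      simp
    obtain ⟨i, hi⟩ := this
    have hz : ∏ i, (Matrix.of (s.piecewise a b)) (σ i) i = 0 :=
      Finset.prod_eq_zero (Finset.mem_univ i) hi
    rw [hz, smul_zero]

/-- Order-preserving enumeration of `Ŝ ∪ M̂`. -/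
def rowMap {n m k : ℕ} (f : Fin k → Fin n) : Fin (k + m) → SumLexIdx n m :=
  Fin.addCases (fun i => inlL (f i)) (fun j => inrL j)

lemma rowMap_strictMono {n m k : ℕ} (f : Fin k → Fin n) (hf : StrictMono f) :
    StrictMono (rowMap (m := m) f) := by
  intro x y
  induction x using Fin.addCases with
  | left x =>
    induction y using Fin.addCases with
    | left y =>
      intro h
      simp only [rowMap, Fin.addCases_left, inlL, Sum.Lex.inl_lt_inl_iff]
      exact hf h
    | right y =>
      intro h
      simp only [rowMap, Fin.addCases_left, Fin.addCases_right, inlL, inrL]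
      exact Sum.Lex.inl_lt_inr _ _
  | right x =>
    induction y using Fin.addCases with
    | left y =>
      intro h
      rw [Fin.lt_def] at h
      simp at h
      omega
    | right y =>
      intro h
      simp only [rowMap, Fin.addCases_right, inrL, Sum.Lex.inr_lt_inr_iff]
      exact (Fin.strictMono_natAdd k).lt_iff_lt.1 h

lemma rowMap_image {n m : ℕ} {k : ℕ} (S : Finset (Fin n)) (hS : S.card = k) (W : Finset (Fin m)) :
    (Finset.univ.filter (fun x => x ∉ Finset.univ.image (Fin.natAdd k) ∨
      x ∈ W.image (Fin.natAdd k))).image (rowMap (m := m) (S.orderEmbOfFin hS)) =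
      S.image inlL ∪ W.image inrL := by
  have hne : ∀ (x : Fin k) (y : Fin m), Fin.natAdd k y ≠ Fin.castAdd m x := fun x y h => by
    have := congrArg Fin.val h
    simp at this
    omega
  ext z
  simp only [Finset.mem_image, Finset.mem_filter, Finset.mem_univ, true_and, Finset.mem_union]
  constructor
  · rintro ⟨x, hx, rfl⟩
    induction x using Fin.addCases with
    | left x =>
      exact Or.inl ⟨_, Finset.orderEmbOfFin_mem S hS x, by simp [rowMap]⟩
    | right x =>
      refine Or.inr ⟨x, ?_, by simp [rowMap]⟩
      rcases hx with hx | ⟨a, ha, hax⟩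
      · exact absurd ⟨x, rfl⟩ hx
      · rwa [← (Fin.natAdd_injective m k) hax]
  · rintro (⟨a, ha, rfl⟩ | ⟨a, ha, rfl⟩)
    · rw [← Finset.image_orderEmbOfFin_univ S hS] at ha
      obtain ⟨i, -, rfl⟩ := Finset.mem_image.1 ha
      exact ⟨Fin.castAdd m i, Or.inl (by rintro ⟨y, hy⟩; exact hne _ _ hy), by simp [rowMap]⟩
    · exact ⟨Fin.natAdd k a, Or.inr ⟨a, ha, rfl⟩, by simp [rowMap]⟩

/-- The partial supertrace (over the right block) of the exterior algebra action of a
matrix `A` indexed by `Fin n ⊕ Fin m`, evaluated on minors `(S,T)` of the left block,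
equals a contraction against the top form of the right block transported by `1 - A`. -/
theorem partial_supertrace_eq_top_form_contraction
    {R : Type*} [CommRing R] {n m : ℕ}
    (A : Matrix (Fin n ⊕ Fin m) (Fin n ⊕ Fin m) R)
    (k : ℕ) (S T : Finset (Fin n)) (hS : S.card = k) (hT : T.card = k) :
    ∑ W : Finset (Fin m), (-1 : R) ^ W.card *
        fminor (toLexMat A) (S.image inlL ∪ W.image inrL)
          (T.image inlL ∪ W.image inrL)
      = ∑ p ∈ Finset.univ.filter
            (fun p : Finset (SumLexIdx n m) × Finset (SumLexIdx n m) =>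
              Disjoint p.1 p.2 ∧
              p.1 ∪ p.2 = S.image inlL ∪ (Finset.univ : Finset (Fin m)).image inrL ∧
              p.1.card = k),
          epsSign R p.1 p.2 *
            fminor (toLexMat A) p.1 (T.image inlL) *
            fminor (1 - toLexMat A) p.2
              ((Finset.univ : Finset (Fin m)).image inrL) := by
  classical
  let r : Fin (k + m) → SumLexIdx n m := rowMap (S.orderEmbOfFin hS)
  let c : Fin (k + m) → SumLexIdx n m := rowMap (T.orderEmbOfFin hT)
  have hr : StrictMono r := rowMap_strictMono _ (OrderEmbedding.strictMono _)
  have hc : StrictMono c := rowMap_strictMono _ (OrderEmbedding.strictMono _)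
  let M : Finset (Fin (k + m)) := Finset.univ.image (Fin.natAdd k)
  let L : Finset (Fin (k + m)) := Finset.univ.image (Fin.castAdd m)
  have hdis : ∀ j ∈ L, j ∉ M := by
    intro j hj hj'
    obtain ⟨x, -, rfl⟩ := Finset.mem_image.1 hj
    obtain ⟨y, -, hy⟩ := Finset.mem_image.1 hj'
    have := congrArg Fin.val hy
    simp at this
    omega
  let B : Matrix (Fin (k + m)) (Fin (k + m)) R := (toLexMat A).submatrix r c
  let D : Matrix (Fin (k + m)) (Fin (k + m)) R :=
    Matrix.of fun i j => if j ∈ M then (1 - B) i j else B i j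
  have hLc : L.image c = T.image inlL := by
    simp only [L, Finset.image_image]
    rw [← Finset.image_orderEmbOfFin_univ T hT, Finset.image_image]
    refine Finset.image_congr fun i _ => ?_
    simp [c, rowMap]
  have hMc : M.image c = Finset.univ.image inrL := by
    simp only [M, Finset.image_image]
    refine Finset.image_congr fun i _ => ?_
    simp [c, rowMap]
  have hru : Finset.univ.image r = S.image inlL ∪ (Finset.univ : Finset (Fin m)).image inrL := by
    rw [← rowMap_image S hS Finset.univ]
    congr 1
    ext x
    simp only [Finset.mem_univ, Finset.mem_filter, true_and, true_iff]
    exact (em _).symm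
  have hone : ∀ i, ∀ j ∈ M, (1 - B) i j = ((1 - toLexMat A).submatrix r c) i j := by
    intro i j hj
    obtain ⟨y, -, rfl⟩ := Finset.mem_image.1 hj
    have h1 : c (Fin.natAdd k y) = r (Fin.natAdd k y) := by simp [r, c, rowMap]
    simp only [Matrix.sub_apply, Matrix.submatrix_apply, B, Matrix.one_apply, h1,
      hr.injective.eq_iff]
  have lhs : ∑ W : Finset (Fin m), (-1 : R) ^ W.card *
        fminor (toLexMat A) (S.image inlL ∪ W.image inrL)
          (T.image inlL ∪ W.image inrL) = D.det := by
    rw [det_cols B M]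
    refine Finset.sum_bij (fun W _ => W.image (Fin.natAdd k)) ?_ ?_ ?_ ?_
    · intro W _
      exact Finset.mem_powerset.2 (Finset.image_subset_image (Finset.subset_univ _))
    · intro W _ W' _ h
      exact Finset.image_injective (Fin.natAdd_injective m k) h
    · intro s hs
      obtain ⟨W, -, hW⟩ := Finset.subset_image_iff.1 (Finset.mem_powerset.1 hs)
      exact ⟨W, Finset.mem_univ _, hW⟩
    · intro W _
      rw [Finset.card_image_of_injective _ (Fin.natAdd_injective m k)]
      congr 1
      have hv : (Finset.univ : Finset {x // x ∉ M ∨ x ∈ W.image (Fin.natAdd k)}).image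
          Subtype.val = Finset.univ.filter (fun x => x ∉ M ∨ x ∈ W.image (Fin.natAdd k)) := by
        ext x
        simp
      rw [fminor_eq_det (toLexMat A)
        (r ∘ (Subtype.val : {x // x ∉ M ∨ x ∈ W.image (Fin.natAdd k)} → _))
        (c ∘ (Subtype.val : {x // x ∉ M ∨ x ∈ W.image (Fin.natAdd k)} → _))
        (hr.comp (Subtype.strictMono_coe _)) (hc.comp (Subtype.strictMono_coe _))
        (by rw [← Finset.image_image, hv]; exact rowMap_image S hS W)
        (by rw [← Finset.image_image, hv]; exact rowMap_image T hT W)]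
      rfl
  rw [lhs, laplace D]
  refine Finset.sum_bij (fun s _ => (s.image r, sᶜ.image r)) ?_ ?_ ?_ ?_
  · intro s hs
    have hs := (Finset.mem_filter.1 hs).2
    refine Finset.mem_filter.2 ⟨Finset.mem_univ _, ?_, ?_, ?_⟩
    · exact (Finset.disjoint_image hr.injective).2 disjoint_compl_right
    · rw [← Finset.image_union, Finset.union_compl, hru]
    · rw [Finset.card_image_of_injective _ hr.injective, hs]
  · intro s _ s' _ h
    exact Finset.image_injective hr.injective (Prod.ext_iff.1 h).1
  · rintro ⟨p, q⟩ hp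
    obtain ⟨-, hd, hu, hk⟩ := Finset.mem_filter.1 hp
    simp only at hd hu hk
    rw [← hru] at hu
    obtain ⟨s, -, rfl⟩ := Finset.subset_image_iff.1 (hu ▸ Finset.subset_union_left : p ⊆ _)
    obtain ⟨t, -, rfl⟩ := Finset.subset_image_iff.1 (hu ▸ Finset.subset_union_right : q ⊆ _)
    rw [Finset.card_image_of_injective _ hr.injective] at hk
    refine ⟨s, Finset.mem_filter.2 ⟨Finset.mem_univ _, hk⟩, ?_⟩
    rw [Finset.disjoint_image hr.injective] at hd
    rw [← Finset.image_union] at hu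
    have hu := Finset.image_injective hr.injective hu
    have : sᶜ = t := (IsCompl.of_eq (Finset.disjoint_iff_inter_eq_empty.1 hd) hu).compl_eq
    rw [this]
  · intro s _
    dsimp only
    have e1 : epsSign R (s.image r) (sᶜ.image r) = epsSign R s sᶜ := by
      convert epsSign_image (R := R) r hr s sᶜ
    have e2 : fminor (toLexMat A) (s.image r) (L.image c) =
        fminor ((toLexMat A).submatrix r c) s L := by
      convert fminor_image (toLexMat A) r c hr hc s L
    have e3 : fminor (1 - toLexMat A) (sᶜ.image r) (M.image c) =
        fminor ((1 - toLexMat A).submatrix r c) sᶜ M := by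
      convert fminor_image (1 - toLexMat A) r c hr hc sᶜ M
    rw [← hLc, ← hMc, e1, e2, e3]
    congr 1
    · congr 1
      refine fminor_congr _ _ _ _ fun i _ j hj => ?_
      simp [D, hdis j hj, B]
    · refine fminor_congr _ _ _ _ fun i _ j hj => ?_
      rw [← hone i j hj]
      exact if_pos hj
end

section
/- Let K be a field and let B = Matrix.fromBlocks H J K' L be an (n+m)×(n+m) matrix over K with H of size n×n and L of size m×m invertible, and let D = H − J·L⁻¹·K' be the Schur complement of L in B. Then for every k and all finsets S, T ⊆ Fin n with S.card = T.card = k, one has ∑_{(R₁,R₂)} ε(R₁,R₂) · det (1−B)[R₁, T̂] · det B[R₂, M̂] = det L · det (1−D)[S,T], where the sum ranges over all pairs of disjoint finsets R₁, R₂ of Fin n ⊕ Fin m with R₁ ∪ R₂ = Ŝ ∪ M̂ and R₁.card = k. -/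
open Matrix

theorem fminor_eq_aux {ι R : Type*} [LinearOrder ι] [CommRing R] (A : Matrix ι ι R)
    {q : ℕ} (s t : Fin q → ι) (hs : StrictMono s) (ht : StrictMono t) (S T : Finset ι)
    (hS : Finset.univ.image s = S) (hT : Finset.univ.image t = T) :
    fminor A S T = (Matrix.of fun i j => A (s i) (t j)).det := by
  have hcS : S.card = q := by
    rw [← hS, Finset.card_image_of_injective _ hs.injective]; simp
  have hcT : T.card = q := by
    rw [← hT, Finset.card_image_of_injective _ ht.injective]; simp
  subst hcT
  have h1 : s = S.orderEmbOfFin hcS :=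
    Finset.orderEmbOfFin_unique hcS (fun x => by rw [← hS]; simp) hs
  have h2 : t = T.orderEmbOfFin rfl :=
    Finset.orderEmbOfFin_unique rfl (fun x => by rw [← hT]; simp) ht
  rw [fminor, dif_pos hcS, ← h1, ← h2]

theorem epsSign_eq_aux {ι R : Type*} [LinearOrder ι] [CommRing R] {k m : ℕ}
    (r₁ : Fin k → ι) (r₂ : Fin m → ι) (h1 : StrictMono r₁) (h2 : StrictMono r₂) :
    epsSign R (Finset.univ.image r₁) (Finset.univ.image r₂) =
      ∏ i, ∏ j, if r₂ j < r₁ i then (-1 : R) else 1 := by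
  rw [epsSign, ← Finset.prod_const, Finset.prod_filter, Finset.prod_product,
    Finset.prod_image (fun _ _ _ _ h => h1.injective h)]
  refine Finset.prod_congr rfl fun i _ => ?_
  rw [Finset.prod_image (fun _ _ _ _ h => h2.injective h)]

theorem sign_shuffle_aux {ι R : Type*} [LinearOrder ι] [CommRing R] {k m : ℕ}
    (u : Fin k ⊕ Fin m → ι) (hu : StrictMono (u ∘ finSumFinEquiv.symm))
    (r₁ : Fin k → ι) (r₂ : Fin m → ι) (h1 : StrictMono r₁) (h2 : StrictMono r₂)
    (hne : ∀ i j, r₁ i ≠ r₂ j)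
    (τ : Equiv.Perm (Fin k ⊕ Fin m)) (hτ : ∀ x, u (τ x) = Sum.elim r₁ r₂ x) :
    epsSign R (Finset.univ.image r₁) (Finset.univ.image r₂) =
      ((Equiv.Perm.sign τ : ℤ) : R) := by
  rw [epsSign_eq_aux r₁ r₂ h1 h2, ← Equiv.Perm.sign_permCongr finSumFinEquiv τ,
    Equiv.Perm.sign_eq_prod_prod_Ioi]
  have key : ∀ i j, (finSumFinEquiv.permCongr τ i < finSumFinEquiv.permCongr τ j) ↔
      Sum.elim r₁ r₂ (finSumFinEquiv.symm i) < Sum.elim r₁ r₂ (finSumFinEquiv.symm j) := by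
    intro i j
    rw [← hu.lt_iff_lt]
    simp [Equiv.permCongr_apply, hτ]
  have e1 : ∀ i : Fin (k + m), ∏ j ∈ Finset.Ioi i,
      (if finSumFinEquiv.permCongr τ i < finSumFinEquiv.permCongr τ j then (1 : ℤˣ) else -1)
      = ∏ j, if i < j then (if Sum.elim r₁ r₂ (finSumFinEquiv.symm i) <
        Sum.elim r₁ r₂ (finSumFinEquiv.symm j) then (1 : ℤˣ) else -1) else 1 := by
    intro i
    rw [← Finset.prod_filter]
    refine Finset.prod_congr (by ext; simp) fun j _ => ?_
    simp only [key]
  simp only [e1]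
  rw [Fin.prod_univ_add]
  have z1 : ∀ i : Fin k, (∏ j : Fin (k+m), if Fin.castAdd m i < j then
      (if Sum.elim r₁ r₂ (finSumFinEquiv.symm (Fin.castAdd m i)) <
        Sum.elim r₁ r₂ (finSumFinEquiv.symm j) then (1 : ℤˣ) else -1) else 1)
      = ∏ j : Fin m, if r₂ j < r₁ i then (-1 : ℤˣ) else 1 := by
    intro i
    rw [Fin.prod_univ_add, Finset.prod_eq_one, one_mul]
    · refine Finset.prod_congr rfl fun j _ => ?_
      rw [if_pos (by simp only [Fin.lt_def, Fin.val_castAdd, Fin.val_natAdd]; omega)]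
      simp only [finSumFinEquiv_symm_apply_castAdd, finSumFinEquiv_symm_apply_natAdd,
        Sum.elim_inl, Sum.elim_inr]
      rcases lt_or_gt_of_ne (hne i j) with h | h
      · simp [h, h.not_gt]
      · simp [h, h.not_gt]
    · intro j _
      simp only [finSumFinEquiv_symm_apply_castAdd, Sum.elim_inl, h1.lt_iff_lt]
      by_cases h : i < j <;> simp [h]
      exact not_lt.1 h
  have z2 : ∀ i : Fin m, (∏ j : Fin (k+m), if Fin.natAdd k i < j then
      (if Sum.elim r₁ r₂ (finSumFinEquiv.symm (Fin.natAdd k i)) <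
        Sum.elim r₁ r₂ (finSumFinEquiv.symm j) then (1 : ℤˣ) else -1) else 1)
      = 1 := by
    intro i
    refine Finset.prod_eq_one fun j _ => ?_
    induction j using Fin.addCases with
    | left j =>
      rw [if_neg]
      simp only [Fin.lt_def, Fin.val_castAdd, Fin.val_natAdd]; omega
    | right j =>
      simp only [finSumFinEquiv_symm_apply_natAdd, Sum.elim_inr, h2.lt_iff_lt]
      by_cases h : i < j <;> simp [h]
  simp only [z1, z2, Finset.prod_const_one, mul_one]
  push_cast
  refine Finset.prod_congr rfl fun i _ => Finset.prod_congr rfl fun j _ => ?_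
  split_ifs <;> simp

theorem laplace_aux {ι R : Type*} [LinearOrder ι] [Fintype ι] [CommRing R] {k m : ℕ}
    (u : Fin k ⊕ Fin m → ι) (hu : StrictMono (u ∘ finSumFinEquiv.symm))
    (t₁ : Fin k → ι) (t₂ : Fin m → ι) (ht1 : StrictMono t₁) (ht2 : StrictMono t₂)
    (A B : Matrix ι ι R) :
    ∑ p ∈ Finset.univ.filter (fun p : Finset ι × Finset ι =>
        Disjoint p.1 p.2 ∧ p.1 ∪ p.2 = Finset.univ.image u ∧ p.1.card = k),
      epsSign R p.1 p.2 * fminor A p.1 (Finset.univ.image t₁) *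
        fminor B p.2 (Finset.univ.image t₂)
    = (Matrix.of fun i j => Sum.elim (fun j => A (u i) (t₁ j)) (fun j => B (u i) (t₂ j)) j).det := by
  classical
  have hui : Function.Injective u := by
    have := hu.injective.comp finSumFinEquiv.injective
    simpa [Function.comp_assoc] using this
  rw [Matrix.det_apply']
  simp only [Fintype.prod_sum_type, Matrix.of_apply, Sum.elim_inl, Sum.elim_inr]
  rw [← Finset.sum_fiberwise_of_maps_to (s := Finset.univ)
    (g := fun σ : Equiv.Perm (Fin k ⊕ Fin m) =>
      (Finset.univ.image (fun i => u (σ (Sum.inl i))), Finset.univ.image (fun i => u (σ (Sum.inr i)))))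
    (t := Finset.univ.filter (fun p : Finset ι × Finset ι =>
        Disjoint p.1 p.2 ∧ p.1 ∪ p.2 = Finset.univ.image u ∧ p.1.card = k))]
  · refine Finset.sum_congr rfl fun p hp => ?_
    obtain ⟨R₁, R₂⟩ := p
    simp only [Finset.mem_filter, Finset.mem_univ, true_and] at hp
    obtain ⟨hd, hU, hc1⟩ := hp
    have hc2 : R₂.card = m := by
      have := Finset.card_union_of_disjoint hd
      rw [hU, Finset.card_image_of_injective _ hui, hc1] at this
      simp at this
      omega
    obtain ⟨r₁, h1, hr1⟩ : ∃ r₁ : Fin k → ι, StrictMono r₁ ∧ Finset.univ.image r₁ = R₁ :=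
      ⟨R₁.orderEmbOfFin hc1, (R₁.orderEmbOfFin hc1).strictMono, by simp⟩
    obtain ⟨r₂, h2, hr2⟩ : ∃ r₂ : Fin m → ι, StrictMono r₂ ∧ Finset.univ.image r₂ = R₂ :=
      ⟨R₂.orderEmbOfFin hc2, (R₂.orderEmbOfFin hc2).strictMono, by simp⟩
    subst hr1 hr2
    have hne : ∀ i j, r₁ i ≠ r₂ j := fun i j h =>
      Finset.disjoint_left.1 hd (Finset.mem_image_of_mem r₁ (Finset.mem_univ i))
        (h ▸ Finset.mem_image_of_mem r₂ (Finset.mem_univ j))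
    have hex : ∀ x, ∃ y, u y = Sum.elim r₁ r₂ x := by
      intro x
      have : Sum.elim r₁ r₂ x ∈ Finset.univ.image u := by
        rw [← hU]; cases x <;> simp
      simpa using this
    choose f hf using hex
    have hfi : Function.Injective f := by
      intro x y h
      have : Sum.elim r₁ r₂ x = Sum.elim r₁ r₂ y := by rw [← hf, ← hf, h]
      exact (Sum.elim_injective.2 ⟨h1.injective, h2.injective, hne⟩) this
    let τ : Equiv.Perm (Fin k ⊕ Fin m) :=
      Equiv.ofBijective f (Finite.injective_iff_bijective.1 hfi)
    have hτ : ∀ x, u (τ x) = Sum.elim r₁ r₂ x := hf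
    rw [fminor_eq_aux A r₁ t₁ h1 ht1 _ _ rfl rfl, fminor_eq_aux B r₂ t₂ h2 ht2 _ _ rfl rfl,
      sign_shuffle_aux u hu r₁ r₂ h1 h2 hne τ hτ, Matrix.det_apply', Matrix.det_apply',
      mul_assoc, Finset.sum_mul_sum, ← Finset.sum_product', Finset.mul_sum]
    refine Finset.sum_bij (fun (q : Equiv.Perm (Fin k) × Equiv.Perm (Fin m)) _ =>
      τ * Equiv.Perm.sumCongr q.1 q.2) ?_ ?_ ?_ ?_
    · rintro ⟨α, β⟩ _
      simp only [Finset.mem_filter, Finset.mem_univ, true_and, Equiv.Perm.mul_apply,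
        Equiv.Perm.sumCongr_apply, Sum.map_inl, Sum.map_inr, hτ, Sum.elim_inl, Sum.elim_inr,
        Prod.mk.injEq]
      constructor
      · ext x; simp only [Finset.mem_image, Finset.mem_univ, true_and]
        exact (α.surjective.exists (p := fun a => r₁ a = x)).symm
      · ext x; simp only [Finset.mem_image, Finset.mem_univ, true_and]
        exact (β.surjective.exists (p := fun a => r₂ a = x)).symm
    · rintro a _ b _ h
      exact Equiv.Perm.sumCongrHom_injective (mul_left_cancel h)
    · intro σ hσ
      simp only [Finset.mem_filter, Finset.mem_univ, true_and, Prod.mk.injEq] at hσ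
      have : τ⁻¹ * σ ∈ (Equiv.Perm.sumCongrHom (Fin k) (Fin m)).range := by
        apply Equiv.Perm.mem_sumCongrHom_range_of_perm_mapsTo_inl
        rintro _ ⟨i, rfl⟩
        have : u (σ (Sum.inl i)) ∈ Finset.univ.image r₁ := by
          rw [← hσ.1]; simp
        obtain ⟨j, -, hj⟩ := Finset.mem_image.1 this
        refine ⟨j, ?_⟩
        rw [Equiv.Perm.mul_apply, Equiv.Perm.eq_inv_iff_eq]
        exact hui (by rw [hτ]; exact hj)
      obtain ⟨q, hq⟩ := this
      refine ⟨q, Finset.mem_univ _, ?_⟩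
      have : Equiv.Perm.sumCongr q.1 q.2 = τ⁻¹ * σ := hq
      rw [this]; simp
    · rintro ⟨α, β⟩ _
      simp only [Equiv.Perm.sign_mul, Equiv.Perm.sign_sumCongr, Equiv.Perm.mul_apply,
        Equiv.Perm.sumCongr_apply, Sum.map_inl, Sum.map_inr, hτ, Sum.elim_inl, Sum.elim_inr,
        Matrix.of_apply]
      push_cast
      ring
  · intro σ _
    simp only [Finset.mem_filter, Finset.mem_univ, true_and]
    refine ⟨?_, ?_, ?_⟩
    · rw [Finset.disjoint_left]
      intro x hx hy
      simp only [Finset.mem_image, Finset.mem_univ, true_and] at hx hy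
      obtain ⟨i, rfl⟩ := hx
      obtain ⟨j, hj⟩ := hy
      have := σ.injective (hui hj)
      simp at this
    · ext x
      simp only [Finset.mem_union, Finset.mem_image, Finset.mem_univ, true_and]
      rw [σ.surjective.exists, Sum.exists]
    · rw [Finset.card_image_of_injective]
      · simp
      · exact hui.comp (σ.injective.comp Sum.inl_injective)

/-- For `B = fromBlocks H J K' L` with `L` invertible and Schur complement
`D = H - J L⁻¹ K'`, the contraction of the exterior action of `1 - B` against the
top form of the right block transported by `B` equals `det L` times the minor of
`1 - D`. -/
theorem contraction_eq_det_mul_minor_one_sub_schur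
    {K : Type*} [Field K] {n m : ℕ}
    (H : Matrix (Fin n) (Fin n) K) (J : Matrix (Fin n) (Fin m) K)
    (K' : Matrix (Fin m) (Fin n) K) (L : Matrix (Fin m) (Fin m) K)
    (hL : IsUnit L.det)
    (k : ℕ) (S T : Finset (Fin n)) (hS : S.card = k) (hT : T.card = k) :
    ∑ p ∈ Finset.univ.filter
          (fun p : Finset (SumLexIdx n m) × Finset (SumLexIdx n m) =>
            Disjoint p.1 p.2 ∧
            p.1 ∪ p.2 = S.image inlL ∪ (Finset.univ : Finset (Fin m)).image inrL ∧
            p.1.card = k),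
        epsSign K p.1 p.2 *
          fminor (1 - toLexMat (Matrix.fromBlocks H J K' L)) p.1 (T.image inlL) *
          fminor (toLexMat (Matrix.fromBlocks H J K' L)) p.2
            ((Finset.univ : Finset (Fin m)).image inrL)
      = L.det * fminor (1 - (H - J * L⁻¹ * K')) S T := by
  classical
  obtain ⟨s, hs, hsS⟩ : ∃ s : Fin k → Fin n, StrictMono s ∧ Finset.univ.image s = S :=
    ⟨S.orderEmbOfFin hS, (S.orderEmbOfFin hS).strictMono, by simp⟩
  obtain ⟨t, ht, htT⟩ : ∃ t : Fin k → Fin n, StrictMono t ∧ Finset.univ.image t = T :=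
    ⟨T.orderEmbOfFin hT, (T.orderEmbOfFin hT).strictMono, by simp⟩
  have hinl : StrictMono (inlL : Fin n → SumLexIdx n m) := fun a b h => Sum.Lex.inl_lt_inl_iff.2 h
  have hinr : StrictMono (inrL : Fin m → SumLexIdx n m) := fun a b h => Sum.Lex.inr_lt_inr_iff.2 h
  let u : Fin k ⊕ Fin m → SumLexIdx n m := Sum.elim (fun i => inlL (s i)) inrL
  have hu : StrictMono (u ∘ finSumFinEquiv.symm) := by
    intro i j hij
    induction i using Fin.addCases with
    | left i =>
      induction j using Fin.addCases with
      | left j =>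
        simp only [u, Function.comp, finSumFinEquiv_symm_apply_castAdd, Sum.elim_inl]
        exact hinl (hs hij)
      | right j =>
        simp only [u, Function.comp, finSumFinEquiv_symm_apply_castAdd,
          finSumFinEquiv_symm_apply_natAdd, Sum.elim_inl, Sum.elim_inr]
        exact Sum.Lex.inl_lt_inr _ _
    | right i =>
      induction j using Fin.addCases with
      | left j =>
        simp only [Fin.lt_def, Fin.val_castAdd, Fin.val_natAdd] at hij
        omega
      | right j =>
        simp only [u, Function.comp, finSumFinEquiv_symm_apply_natAdd, Sum.elim_inr]
        have h := hij
        rw [Fin.lt_def, Fin.val_natAdd, Fin.val_natAdd] at h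
        exact hinr (Fin.lt_def.2 (by omega))
  have hU : S.image inlL ∪ (Finset.univ : Finset (Fin m)).image inrL = Finset.univ.image u := by
    ext x
    simp [u, ← hsS, Sum.exists]
  have hTi : T.image inlL = Finset.univ.image (fun i => (inlL (t i) : SumLexIdx n m)) := by
    rw [← htT, Finset.image_image]; rfl
  have lap := laplace_aux u hu (fun i => inlL (t i)) inrL (hinl.comp ht) hinr
    (1 - toLexMat (Matrix.fromBlocks H J K' L)) (toLexMat (Matrix.fromBlocks H J K' L))
  rw [hU, hTi]
  refine Eq.trans ?_ (lap.trans ?_)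
  · congr!
  rw [fminor_eq_aux _ s t hs ht S T hsS htT]
  letI := Matrix.invertibleOfIsUnitDet L hL
  have hblock : (Matrix.of fun i j => Sum.elim
      (fun j => (1 - toLexMat (Matrix.fromBlocks H J K' L)) (u i) (inlL (t j)))
      (fun j => toLexMat (Matrix.fromBlocks H J K' L) (u i) (inrL j)) j) =
      Matrix.fromBlocks ((1 - H).submatrix s t) (J.submatrix s id) (-(K'.submatrix id t)) L := by
    ext i j
    rcases i with i | i <;> rcases j with j | j <;>
      simp [u, toLexMat, inlL, inrL, Matrix.one_apply]
  rw [hblock, Matrix.det_fromBlocks₂₂]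
  congr 2
  ext i j
  simp [Matrix.mul_apply, Matrix.one_apply]
  ring
end
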